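/- arXiv:1610.00927 — 7 statements merged into one kernel-verified Lean document; each statement's English description precedes it below -/
import Mathlib

section
/- Existence direction of Theorem 2.1: For every constant vector C ∈ ℝ^p, the sequence Y : ℕ → ℝ^m defined by Y_k = Q_p · J_p^k · C + Q · D_k satisfies F · Y_{k+1} = G · Y_k + V_k for all k ≥ 0. -/
open Matrix Finset

/-- Existence direction of Theorem 2.1: for every constant vector `C ∈ ℝ^p`, the
sequence `Y_k = Q_p · J_p^k · C + Q · D_k` solves `F Y_{k+1} = G Y_k + V_k`. -/
theorem theorem_2_1_existence
    (p q : ℕ) (hp : 1 ≤ p) (hq : 1 ≤ q)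
    (F G P Q : Matrix (Fin p ⊕ Fin q) (Fin p ⊕ Fin q) ℝ)
    (hP : IsUnit P) (hQ : IsUnit Q)
    (Jp : Matrix (Fin p) (Fin p) ℝ) (qs : ℕ) (Hq : Matrix (Fin q) (Fin q) ℝ)
    (hH : Hq ^ qs = 0)
    (hF : P * F * Q = Matrix.fromBlocks 1 0 0 Hq)
    (hG : P * G * Q = Matrix.fromBlocks Jp 0 0 1)
    (Qp : Matrix (Fin p ⊕ Fin q) (Fin p) ℝ) (hQp : Qp = Q.submatrix id Sum.inl)
    (P1 : Matrix (Fin p) (Fin p ⊕ Fin q) ℝ) (hP1 : P1 = P.submatrix Sum.inl id)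
    (P2 : Matrix (Fin q) (Fin p ⊕ Fin q) ℝ) (hP2 : P2 = P.submatrix Sum.inr id)
    (V : ℕ → (Fin p ⊕ Fin q) → ℝ)
    (D : ℕ → (Fin p ⊕ Fin q) → ℝ)
    (hD : ∀ k, D k = Sum.elim
        (∑ i ∈ Finset.range k, (Jp ^ (k - i - 1)).mulVec (P1.mulVec (V i)))
        (-(∑ i ∈ Finset.range qs, (Hq ^ i).mulVec (P2.mulVec (V (k + i))))))
    (C : Fin p → ℝ)
    (Y : ℕ → (Fin p ⊕ Fin q) → ℝ)
    (hY : ∀ k, Y k = Qp.mulVec ((Jp ^ k).mulVec C) + Q.mulVec (D k)) :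
    ∀ k, F.mulVec (Y (k + 1)) = G.mulVec (Y k) + V k := by
  intro k
  have hYZ : ∀ k, Y k = Q *ᵥ (Sum.elim
      ((Jp ^ k) *ᵥ C + ∑ i ∈ Finset.range k, (Jp ^ (k - i - 1)) *ᵥ (P1 *ᵥ (V i)))
      (-(∑ i ∈ Finset.range qs, (Hq ^ i) *ᵥ (P2 *ᵥ (V (k + i)))))) := by
    intro k
    have h1 : Qp *ᵥ ((Jp ^ k) *ᵥ C) = Q *ᵥ (Sum.elim ((Jp ^ k) *ᵥ C) 0) := by
      subst hQp
      funext j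
      simp [Matrix.mulVec, dotProduct, Fintype.sum_sum_type]
    rw [hY, hD, h1, ← Matrix.mulVec_add]
    congr 1
    funext j
    cases j <;> simp
  have hPV : P *ᵥ V k = Sum.elim (P1 *ᵥ V k) (P2 *ᵥ V k) := by
    subst hP1 hP2
    funext j
    cases j <;> rfl
  have htop : (Jp ^ (k + 1)) *ᵥ C
        + ∑ i ∈ Finset.range (k + 1), (Jp ^ (k + 1 - i - 1)) *ᵥ (P1 *ᵥ (V i))
      = Jp *ᵥ ((Jp ^ k) *ᵥ C + ∑ i ∈ Finset.range k, (Jp ^ (k - i - 1)) *ᵥ (P1 *ᵥ (V i)))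
        + P1 *ᵥ V k := by
    have h0 : k + 1 - k - 1 = 0 := by omega
    rw [Finset.sum_range_succ, h0, pow_zero, Matrix.one_mulVec, Matrix.mulVec_add,
      Matrix.mulVec_sum, Matrix.mulVec_mulVec, ← pow_succ', add_assoc]
    congr 2
    apply Finset.sum_congr rfl
    intro i hi
    have hik := Finset.mem_range.mp hi
    have h2 : k + 1 - i - 1 = (k - i - 1) + 1 := by omega
    rw [h2, pow_succ', ← Matrix.mulVec_mulVec]
  have hbot : Hq *ᵥ (-(∑ i ∈ Finset.range qs, (Hq ^ i) *ᵥ (P2 *ᵥ (V (k + 1 + i)))))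
      = -(∑ i ∈ Finset.range qs, (Hq ^ i) *ᵥ (P2 *ᵥ (V (k + i)))) + P2 *ᵥ V k := by
    have h3 := Finset.sum_range_succ (fun i => (Hq ^ i) *ᵥ (P2 *ᵥ (V (k + i)))) qs
    rw [Finset.sum_range_succ'] at h3
    simp only [hH, Matrix.zero_mulVec, add_zero, pow_zero, Matrix.one_mulVec] at h3
    rw [← h3, Matrix.mulVec_neg, Matrix.mulVec_sum, neg_add, neg_add_cancel_right]
    congr 1
    apply Finset.sum_congr rfl
    intro i _
    rw [Matrix.mulVec_mulVec, ← pow_succ', add_assoc k 1 i, add_comm 1 i]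
  apply Matrix.mulVec_injective_of_isUnit hP
  change P *ᵥ (F *ᵥ Y (k + 1)) = P *ᵥ (G *ᵥ Y k + V k)
  rw [Matrix.mulVec_add, hPV, hYZ, hYZ]
  rw [Matrix.mulVec_mulVec, Matrix.mulVec_mulVec, Matrix.mulVec_mulVec, Matrix.mulVec_mulVec,
    hF, hG,
    Matrix.fromBlocks_mulVec, Matrix.fromBlocks_mulVec]
  simp only [Sum.elim_comp_inl, Sum.elim_comp_inr, Matrix.one_mulVec, Matrix.zero_mulVec,
    add_zero, zero_add]
  rw [htop, hbot]
  funext j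
  cases j <;> rfl
end

section
/- Converse direction of Theorem 2.1: If a sequence Y : ℕ → ℝ^m satisfies F · Y_{k+1} = G · Y_k + V_k for all k ≥ 0, then there exists a constant vector C ∈ ℝ^p such that Y_k = Q_p · J_p^k · C + Q · D_k for all k ≥ 0. -/
open Matrix Finset

/-- Converse direction of Theorem 2.1: every solution of `F Y_{k+1} = G Y_k + V_k`
has the form `Y_k = Q_p · J_p^k · C + Q · D_k` for some constant `C ∈ ℝ^p`. -/
theorem theorem_2_1_converse
    (p q : ℕ) (hp : 1 ≤ p) (hq : 1 ≤ q)
    (F G P Q : Matrix (Fin p ⊕ Fin q) (Fin p ⊕ Fin q) ℝ)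
    (hP : IsUnit P) (hQ : IsUnit Q)
    (Jp : Matrix (Fin p) (Fin p) ℝ) (qs : ℕ) (Hq : Matrix (Fin q) (Fin q) ℝ)
    (hH : Hq ^ qs = 0)
    (hF : P * F * Q = Matrix.fromBlocks 1 0 0 Hq)
    (hG : P * G * Q = Matrix.fromBlocks Jp 0 0 1)
    (Qp : Matrix (Fin p ⊕ Fin q) (Fin p) ℝ) (hQp : Qp = Q.submatrix id Sum.inl)
    (P1 : Matrix (Fin p) (Fin p ⊕ Fin q) ℝ) (hP1 : P1 = P.submatrix Sum.inl id)
    (P2 : Matrix (Fin q) (Fin p ⊕ Fin q) ℝ) (hP2 : P2 = P.submatrix Sum.inr id)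
    (V : ℕ → (Fin p ⊕ Fin q) → ℝ)
    (D : ℕ → (Fin p ⊕ Fin q) → ℝ)
    (hD : ∀ k, D k = Sum.elim
        (∑ i ∈ Finset.range k, (Jp ^ (k - i - 1)).mulVec (P1.mulVec (V i)))
        (-(∑ i ∈ Finset.range qs, (Hq ^ i).mulVec (P2.mulVec (V (k + i))))))
    (Y : ℕ → (Fin p ⊕ Fin q) → ℝ)
    (hY : ∀ k, F.mulVec (Y (k + 1)) = G.mulVec (Y k) + V k) :
    ∃ C : Fin p → ℝ, ∀ k, Y k = Qp.mulVec ((Jp ^ k).mulVec C) + Q.mulVec (D k) := by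
  obtain ⟨R, hQR, -⟩ := isUnit_iff_exists.mp hQ
  obtain ⟨Z, hZ⟩ : ∃ Z : ℕ → (Fin p ⊕ Fin q) → ℝ, ∀ k, Y k = Q.mulVec (Z k) :=
    ⟨fun k => R.mulVec (Y k), fun k => by rw [Matrix.mulVec_mulVec, hQR, Matrix.one_mulVec]⟩
  have key : ∀ k, (Matrix.fromBlocks 1 0 0 Hq).mulVec (Z (k + 1))
      = (Matrix.fromBlocks Jp 0 0 1).mulVec (Z k) + P.mulVec (V k) := by
    intro k
    rw [← hF, ← hG, ← Matrix.mulVec_mulVec, ← Matrix.mulVec_mulVec, ← hZ,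
      ← Matrix.mulVec_mulVec, ← Matrix.mulVec_mulVec, ← hZ, hY, Matrix.mulVec_add]
  have k1 : ∀ k, Z (k + 1) ∘ Sum.inl = Jp.mulVec (Z k ∘ Sum.inl) + P1.mulVec (V k) := by
    intro k
    have h := congrArg (fun f => f ∘ Sum.inl) (key k)
    simp only [Matrix.fromBlocks_mulVec] at h
    ext i
    have h' := congrFun h i
    simp at h'
    subst hP1
    simpa [Matrix.mulVec, dotProduct] using h'
  have k2 : ∀ k, Hq.mulVec (Z (k + 1) ∘ Sum.inr) = Z k ∘ Sum.inr + P2.mulVec (V k) := by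
    intro k
    have h := congrArg (fun f => f ∘ Sum.inr) (key k)
    simp only [Matrix.fromBlocks_mulVec] at h
    ext i
    have h' := congrFun h i
    simp at h'
    subst hP2
    simpa [Matrix.mulVec, dotProduct] using h'
  have s1 : ∀ k, Z k ∘ Sum.inl = (Jp ^ k).mulVec (Z 0 ∘ Sum.inl)
      + ∑ i ∈ Finset.range k, (Jp ^ (k - i - 1)).mulVec (P1.mulVec (V i)) := by
    intro k
    induction k with
    | zero => simp
    | succ k ih =>
      have hs : ∑ i ∈ Finset.range k, (Jp ^ (k + 1 - i - 1)).mulVec (P1.mulVec (V i))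
          = Jp.mulVec (∑ i ∈ Finset.range k, (Jp ^ (k - i - 1)).mulVec (P1.mulVec (V i))) := by
        rw [Matrix.mulVec_sum]
        refine Finset.sum_congr rfl fun i hi => ?_
        have := Finset.mem_range.mp hi
        have e : k + 1 - i - 1 = (k - i - 1) + 1 := by omega
        rw [e, pow_succ', ← Matrix.mulVec_mulVec]
      rw [k1, ih, Finset.sum_range_succ, hs, Matrix.mulVec_add, Matrix.mulVec_mulVec, ← pow_succ']
      simp [add_assoc]
  have s2 : ∀ n k, Z k ∘ Sum.inr = (Hq ^ n).mulVec (Z (k + n) ∘ Sum.inr)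
      - ∑ i ∈ Finset.range n, (Hq ^ i).mulVec (P2.mulVec (V (k + i))) := by
    intro n k
    induction n with
    | zero => simp
    | succ n ih =>
      rw [Finset.sum_range_succ, pow_succ, ← Matrix.mulVec_mulVec, ← add_assoc, k2,
        Matrix.mulVec_add, ih]
      abel
  refine ⟨Z 0 ∘ Sum.inl, fun k => ?_⟩
  have hq' : Qp.mulVec ((Jp ^ k).mulVec (Z 0 ∘ Sum.inl))
      = Q.mulVec (Sum.elim ((Jp ^ k).mulVec (Z 0 ∘ Sum.inl)) 0) := by
    subst hQp
    ext i
    simp [Matrix.mulVec, dotProduct]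
  rw [hq', ← Matrix.mulVec_add, hZ, hD]
  congr 1
  have e2 := s2 qs k
  rw [hH, Matrix.zero_mulVec, zero_sub] at e2
  ext i
  rcases i with i | i
  · exact congrFun (s1 k) i
  · have := congrFun e2 i
    simpa using this
end

section
/- Proposition 2.1: The initial condition Y₀ ∈ ℝ^m is consistent (i.e., there exists a sequence Y : ℕ → ℝ^m with F · Y_{k+1} = G · Y_k + V_k for all k ≥ 0 and Y(0) = Y₀) if and only if there exists C ∈ ℝ^p with Y₀ = Q_p · C + Q · D₀, i.e., Y₀ ∈ colspan(Q_p) + Q·D₀. -/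
open Matrix Finset

/-- Proposition 2.1: the initial condition `Y₀` is consistent iff
`Y₀ ∈ colspan(Q_p) + Q·D₀`. -/
theorem proposition_2_1
    (p q : ℕ) (hp : 1 ≤ p) (hq : 1 ≤ q)
    (F G P Q : Matrix (Fin p ⊕ Fin q) (Fin p ⊕ Fin q) ℝ)
    (hP : IsUnit P) (hQ : IsUnit Q)
    (Jp : Matrix (Fin p) (Fin p) ℝ) (qs : ℕ) (Hq : Matrix (Fin q) (Fin q) ℝ)
    (hH : Hq ^ qs = 0)
    (hF : P * F * Q = Matrix.fromBlocks 1 0 0 Hq)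
    (hG : P * G * Q = Matrix.fromBlocks Jp 0 0 1)
    (Qp : Matrix (Fin p ⊕ Fin q) (Fin p) ℝ) (hQp : Qp = Q.submatrix id Sum.inl)
    (P1 : Matrix (Fin p) (Fin p ⊕ Fin q) ℝ) (hP1 : P1 = P.submatrix Sum.inl id)
    (P2 : Matrix (Fin q) (Fin p ⊕ Fin q) ℝ) (hP2 : P2 = P.submatrix Sum.inr id)
    (V : ℕ → (Fin p ⊕ Fin q) → ℝ)
    (D : ℕ → (Fin p ⊕ Fin q) → ℝ)
    (hD : ∀ k, D k = Sum.elim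
        (∑ i ∈ Finset.range k, (Jp ^ (k - i - 1)).mulVec (P1.mulVec (V i)))
        (-(∑ i ∈ Finset.range qs, (Hq ^ i).mulVec (P2.mulVec (V (k + i))))))
    (Y₀ : (Fin p ⊕ Fin q) → ℝ) :
    (∃ Y : ℕ → (Fin p ⊕ Fin q) → ℝ,
        (∀ k, F.mulVec (Y (k + 1)) = G.mulVec (Y k) + V k) ∧ Y 0 = Y₀) ↔
      ∃ C : Fin p → ℝ, Y₀ = Qp.mulVec C + Q.mulVec (D 0) := by
  have hPV : ∀ v, P.mulVec v = Sum.elim (P1.mulVec v) (P2.mulVec v) := by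
    intro v; subst hP1 hP2; ext i; cases i <;> rfl
  have hQC : ∀ C : Fin p → ℝ, Qp.mulVec C = Q.mulVec (Sum.elim C 0) := by
    intro C; subst hQp; ext i
    simp [Matrix.mulVec, dotProduct, Fintype.sum_sum_type]
  have hPinj : Function.Injective P.mulVec := Matrix.mulVec_injective_of_isUnit hP
  have key : ∀ (z z' : Fin p → ℝ) (w w' : Fin q → ℝ) (v : (Fin p ⊕ Fin q) → ℝ),
      F.mulVec (Q.mulVec (Sum.elim z' w')) = G.mulVec (Q.mulVec (Sum.elim z w)) + v ↔
        z' = Jp.mulVec z + P1.mulVec v ∧ Hq.mulVec w' = w + P2.mulVec v := by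
    intro z z' w w' v
    rw [← hPinj.eq_iff, Matrix.mulVec_add, Matrix.mulVec_mulVec, Matrix.mulVec_mulVec,
      Matrix.mulVec_mulVec, Matrix.mulVec_mulVec,
      hF, hG, hPV, Matrix.fromBlocks_mulVec, Matrix.fromBlocks_mulVec]
    simp only [Sum.elim_comp_inl, Sum.elim_comp_inr, Matrix.one_mulVec, Matrix.zero_mulVec,
      add_zero, zero_add, ← Sum.elim_add_add]
    constructor
    · intro h
      exact ⟨funext fun i => congrFun h (Sum.inl i), funext fun i => congrFun h (Sum.inr i)⟩
    · rintro ⟨h1, h2⟩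
      rw [h1, h2]
  constructor
  · rintro ⟨Y, hY, rfl⟩
    have hex : ∀ k, ∃ z w, Y k = Q.mulVec (Sum.elim z w) := by
      intro k
      obtain ⟨x, hx⟩ := (Matrix.mulVec_surjective_iff_isUnit.2 hQ) (Y k)
      exact ⟨x ∘ Sum.inl, x ∘ Sum.inr, by rw [Sum.elim_comp_inl_inr, hx]⟩
    choose z w hzw using hex
    have hw : ∀ k, w k = Hq.mulVec (w (k + 1)) - P2.mulVec (V k) := by
      intro k
      have h := hY k
      rw [hzw, hzw k, key] at h
      rw [h.2, add_sub_cancel_right]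
    have hn : ∀ n, w 0 = (Hq ^ n).mulVec (w n)
        - ∑ i ∈ Finset.range n, (Hq ^ i).mulVec (P2.mulVec (V i)) := by
      intro n
      induction n with
      | zero => simp
      | succ n ih =>
        rw [ih, hw n, Finset.sum_range_succ, Matrix.mulVec_sub, Matrix.mulVec_mulVec, ← pow_succ]
        abel
    refine ⟨z 0, ?_⟩
    have h0 := hn qs
    rw [hH, Matrix.zero_mulVec, zero_sub] at h0
    rw [hzw, hQC, ← Matrix.mulVec_add, hD, ← Sum.elim_add_add]
    simp [h0]
  · rintro ⟨C, rfl⟩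
    let z : ℕ → Fin p → ℝ := fun n => Nat.rec C (fun k y => Jp.mulVec y + P1.mulVec (V k)) n
    let w : ℕ → Fin q → ℝ := fun k =>
      -(∑ i ∈ Finset.range qs, (Hq ^ i).mulVec (P2.mulVec (V (k + i))))
    refine ⟨fun k => Q.mulVec (Sum.elim (z k) (w k)), fun k => ?_, ?_⟩
    · rw [key]
      refine ⟨rfl, ?_⟩
      have e1 := Finset.sum_range_succ (fun i => (Hq ^ i).mulVec (P2.mulVec (V (k + i)))) qs
      rw [Finset.sum_range_succ', hH, Matrix.zero_mulVec, add_zero, add_zero] at e1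
      simp only [w]
      rw [← e1, Matrix.mulVec_neg, Matrix.mulVec_sum]
      simp only [Matrix.mulVec_mulVec, ← Matrix.mul_assoc, ← pow_succ', pow_zero, add_zero,
        Matrix.one_mul, neg_add, neg_add_cancel_right]
      simp only [add_assoc, add_comm 1]
    · change Q.mulVec (Sum.elim C (w 0)) = _
      rw [hQC, ← Matrix.mulVec_add, hD, ← Sum.elim_add_add]
      simp [w]
end

section
/- Proposition 2.2 (uniqueness): Suppose the initial condition Y₀ ∈ ℝ^m is consistent, i.e., there exists Z₀ ∈ ℝ^p with Y₀ = Q_p · Z₀ + Q · D₀. Then the initial value problem has a unique solution: any sequence Y : ℕ → ℝ^m with F · Y_{k+1} = G · Y_k + V_k for all k ≥ 0 and Y(0) = Y₀ satisfies Y_k = Q_p · J_p^k · Z₀ + Q · D_k for all k ≥ 0; in particular any two solutions with the same initial value Y₀ coincide. -/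
open Matrix Finset

theorem aux_forward {p : ℕ} (J : Matrix (Fin p) (Fin p) ℝ) (w a : ℕ → Fin p → ℝ)
    (h : ∀ k, a (k + 1) = J *ᵥ a k + w k) (k : ℕ) :
    a k = (J ^ k) *ᵥ a 0 + ∑ i ∈ Finset.range k, (J ^ (k - i - 1)) *ᵥ w i := by
  induction k with
  | zero => simp
  | succ k ih =>
    have hs : ∑ i ∈ Finset.range k, (J ^ (k + 1 - i - 1)) *ᵥ w i
        = J *ᵥ ∑ i ∈ Finset.range k, (J ^ (k - i - 1)) *ᵥ w i := by
      rw [Matrix.mulVec_sum]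
      refine Finset.sum_congr rfl fun i hi => ?_
      have hi' := Finset.mem_range.1 hi
      have e : k + 1 - i - 1 = (k - i - 1) + 1 := by omega
      rw [e, pow_succ', Matrix.mulVec_mulVec]
    rw [h, Finset.sum_range_succ, hs]
    conv_lhs => rw [ih]
    rw [Matrix.mulVec_add, Matrix.mulVec_mulVec, ← pow_succ']
    simp [add_assoc]

theorem aux_backward {q : ℕ} (H : Matrix (Fin q) (Fin q) ℝ) (w b : ℕ → Fin q → ℝ)
    (h : ∀ k, H *ᵥ b (k + 1) = b k + w k) (k n : ℕ) :
    b k = (H ^ n) *ᵥ b (k + n) - ∑ i ∈ Finset.range n, (H ^ i) *ᵥ w (k + i) := by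
  induction n with
  | zero => simp
  | succ n ih =>
    rw [Finset.sum_range_succ, pow_succ, ← Matrix.mulVec_mulVec, ← add_assoc, h,
      Matrix.mulVec_add]
    conv_lhs => rw [ih]
    abel

theorem aux_elim {p q : ℕ} (Q : Matrix (Fin p ⊕ Fin q) (Fin p ⊕ Fin q) ℝ) (z : Fin p → ℝ) :
    (Q.submatrix id Sum.inl) *ᵥ z = Q *ᵥ (Sum.elim z 0) := by
  ext i
  simp [Matrix.mulVec, dotProduct]

/-- Proposition 2.2: if the initial condition `Y₀ = Q_p Z₀ + Q D₀` is consistent, then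
any solution of the initial value problem equals `Y_k = Q_p J_p^k Z₀ + Q D_k`;
in particular any two solutions with the same initial value coincide. -/
theorem proposition_2_2_uniqueness
    (p q : ℕ) (hp : 1 ≤ p) (hq : 1 ≤ q)
    (F G P Q : Matrix (Fin p ⊕ Fin q) (Fin p ⊕ Fin q) ℝ)
    (hP : IsUnit P) (hQ : IsUnit Q)
    (Jp : Matrix (Fin p) (Fin p) ℝ) (qs : ℕ) (Hq : Matrix (Fin q) (Fin q) ℝ)
    (hH : Hq ^ qs = 0)
    (hF : P * F * Q = Matrix.fromBlocks 1 0 0 Hq)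
    (hG : P * G * Q = Matrix.fromBlocks Jp 0 0 1)
    (Qp : Matrix (Fin p ⊕ Fin q) (Fin p) ℝ) (hQp : Qp = Q.submatrix id Sum.inl)
    (P1 : Matrix (Fin p) (Fin p ⊕ Fin q) ℝ) (hP1 : P1 = P.submatrix Sum.inl id)
    (P2 : Matrix (Fin q) (Fin p ⊕ Fin q) ℝ) (hP2 : P2 = P.submatrix Sum.inr id)
    (V : ℕ → (Fin p ⊕ Fin q) → ℝ)
    (D : ℕ → (Fin p ⊕ Fin q) → ℝ)
    (hD : ∀ k, D k = Sum.elim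
        (∑ i ∈ Finset.range k, (Jp ^ (k - i - 1)).mulVec (P1.mulVec (V i)))
        (-(∑ i ∈ Finset.range qs, (Hq ^ i).mulVec (P2.mulVec (V (k + i))))))
    (Y₀ : (Fin p ⊕ Fin q) → ℝ)
    (Z₀ : Fin p → ℝ) (hZ₀ : Y₀ = Qp.mulVec Z₀ + Q.mulVec (D 0))
    (Y : ℕ → (Fin p ⊕ Fin q) → ℝ)
    (hY : ∀ k, F.mulVec (Y (k + 1)) = G.mulVec (Y k) + V k)
    (hY0 : Y 0 = Y₀) :
    (∀ k, Y k = Qp.mulVec ((Jp ^ k).mulVec Z₀) + Q.mulVec (D k)) ∧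
      (∀ Y' : ℕ → (Fin p ⊕ Fin q) → ℝ,
        (∀ k, F.mulVec (Y' (k + 1)) = G.mulVec (Y' k) + V k) → Y' 0 = Y₀ → Y' = Y) := by
  have key : ∀ Y : ℕ → (Fin p ⊕ Fin q) → ℝ,
      (∀ k, F.mulVec (Y (k + 1)) = G.mulVec (Y k) + V k) → Y 0 = Y₀ →
      ∀ k, Y k = Qp.mulVec ((Jp ^ k).mulVec Z₀) + Q.mulVec (D k) := by
    intro Y hY hY0
    obtain ⟨R, hR⟩ := hQ.exists_right_inv
    obtain ⟨L, hL⟩ := hQ.exists_left_inv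
    obtain ⟨X, hX⟩ : ∃ X : ℕ → (Fin p ⊕ Fin q) → ℝ, ∀ k, Y k = Q *ᵥ X k :=
      ⟨fun k => R *ᵥ Y k, fun k => by simp [Matrix.mulVec_mulVec, hR]⟩
    have inj : ∀ x y, Q *ᵥ x = Q *ᵥ y → x = y := by
      intro x y h
      have := congrArg (fun v => L *ᵥ v) h
      simpa [Matrix.mulVec_mulVec, hL] using this
    have hS : ∀ k, (Matrix.fromBlocks 1 0 0 Hq) *ᵥ X (k + 1)
        = (Matrix.fromBlocks Jp 0 0 1) *ᵥ X k + P *ᵥ V k := by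
      intro k
      rw [← hF, ← hG, ← Matrix.mulVec_mulVec, ← hX, ← Matrix.mulVec_mulVec (X k), ← hX,
        ← Matrix.mulVec_mulVec, hY, Matrix.mulVec_add, Matrix.mulVec_mulVec]
    have ha : ∀ k, X (k + 1) ∘ Sum.inl = Jp *ᵥ (X k ∘ Sum.inl) + P1 *ᵥ V k := by
      intro k
      have h := congrArg (fun v => v ∘ Sum.inl) (hS k)
      rw [hP1]
      ext i
      have h := congrFun h i
      simpa [Matrix.fromBlocks_mulVec, Matrix.mulVec, dotProduct] using h
    have hb : ∀ k, Hq *ᵥ (X (k + 1) ∘ Sum.inr) = X k ∘ Sum.inr + P2 *ᵥ V k := by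
      intro k
      have h := congrArg (fun v => v ∘ Sum.inr) (hS k)
      rw [hP2]
      ext i
      have h := congrFun h i
      simpa [Matrix.fromBlocks_mulVec, Matrix.mulVec, dotProduct] using h
    have h0 : X 0 = Sum.elim Z₀ 0 + D 0 := by
      apply inj
      rw [← hX, hY0, hZ₀, hQp, aux_elim, Matrix.mulVec_add]
    have ha0 : X 0 ∘ Sum.inl = Z₀ := by
      rw [h0, hD]
      ext i
      simp
    intro k
    rw [hX, hQp, aux_elim, ← Matrix.mulVec_add]
    congr 1
    have h1 := aux_forward Jp (fun k => P1 *ᵥ V k) (fun k => X k ∘ Sum.inl) ha k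
    have h2 := aux_backward Hq (fun k => P2 *ᵥ V k) (fun k => X k ∘ Sum.inr) hb k qs
    simp only [ha0] at h1
    simp only [hH, Matrix.zero_mulVec, zero_sub] at h2
    rw [hD, ← h2]
    ext i
    rcases i with i | i
    · exact congrFun h1 i
    · simp
  refine ⟨key Y hY hY0, fun Y' h h' => ?_⟩
  funext k
  rw [key Y hY hY0 k, key Y' h h' k]
end

section
/- Corollary 3.1: For the homogeneous system (V_k = 0 for all k), the initial condition Y₀ ∈ ℝ^m is consistent (i.e., there exists a sequence Y : ℕ → ℝ^m with F · Y_{k+1} = G · Y_k for all k ≥ 0 and Y(0) = Y₀) if and only if Y₀ lies in the column span of Q_p, i.e., there exists C ∈ ℝ^p with Y₀ = Q_p · C. -/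
open Matrix Finset

/-- Corollary 3.1: for the homogeneous system, `Y₀` is consistent iff
`Y₀ ∈ colspan(Q_p)`. -/
theorem corollary_3_1
    (p q : ℕ) (hp : 1 ≤ p) (hq : 1 ≤ q)
    (F G P Q : Matrix (Fin p ⊕ Fin q) (Fin p ⊕ Fin q) ℝ)
    (hP : IsUnit P) (hQ : IsUnit Q)
    (Jp : Matrix (Fin p) (Fin p) ℝ) (qs : ℕ) (Hq : Matrix (Fin q) (Fin q) ℝ)
    (hH : Hq ^ qs = 0)
    (hF : P * F * Q = Matrix.fromBlocks 1 0 0 Hq)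
    (hG : P * G * Q = Matrix.fromBlocks Jp 0 0 1)
    (Qp : Matrix (Fin p ⊕ Fin q) (Fin p) ℝ) (hQp : Qp = Q.submatrix id Sum.inl)
    (Y₀ : (Fin p ⊕ Fin q) → ℝ) :
    (∃ Y : ℕ → (Fin p ⊕ Fin q) → ℝ,
        (∀ k, F.mulVec (Y (k + 1)) = G.mulVec (Y k)) ∧ Y 0 = Y₀) ↔
      ∃ C : Fin p → ℝ, Y₀ = Qp.mulVec C := by
  have hQC : ∀ C : Fin p → ℝ, Qp.mulVec C = Q.mulVec (Sum.elim C 0) := by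
    intro C
    subst hQp
    funext i
    simp [Matrix.mulVec, dotProduct, Fintype.sum_sum_type]
  obtain ⟨Qi, hQi⟩ : ∃ R : Matrix (Fin p ⊕ Fin q) (Fin p ⊕ Fin q) ℝ, Q * R = 1 :=
    ⟨_, hQ.mul_val_inv⟩
  obtain ⟨Pi, hPi⟩ : ∃ R : Matrix (Fin p ⊕ Fin q) (Fin p ⊕ Fin q) ℝ, R * P = 1 :=
    ⟨_, hP.val_inv_mul⟩
  have key : ∀ u v : (Fin p ⊕ Fin q) → ℝ,
      F.mulVec (Q.mulVec u) = G.mulVec (Q.mulVec v) ↔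
      (Matrix.fromBlocks 1 0 0 Hq).mulVec u = (Matrix.fromBlocks Jp 0 0 1).mulVec v := by
    intro u v
    rw [← hF, ← hG]
    simp only [← Matrix.mulVec_mulVec]
    constructor
    · intro h
      rw [h]
    · intro h
      have h2 := congrArg (fun w => Pi.mulVec w) h
      simpa only [Matrix.mulVec_mulVec, ← Matrix.mul_assoc, hPi, Matrix.one_mul] using h2
  constructor
  · rintro ⟨Y, hY, rfl⟩
    have hZ : ∀ k, Y k = Q.mulVec (Qi.mulVec (Y k)) := by
      intro k
      rw [Matrix.mulVec_mulVec, hQi, Matrix.one_mulVec]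
    generalize hZd : (fun k => Qi.mulVec (Y k)) = Z at *
    have hZ' : ∀ k, Y k = Q.mulVec (Z k) := by
      intro k
      rw [← hZd]
      exact hZ k
    have hr : ∀ k, Hq.mulVec (Z (k + 1) ∘ Sum.inr) = Z k ∘ Sum.inr := by
      intro k
      have h := hY k
      rw [hZ' k, hZ' (k + 1), key, Matrix.fromBlocks_mulVec, Matrix.fromBlocks_mulVec] at h
      funext i
      simpa using congrFun h (Sum.inr i)
    have hn : ∀ n, (Hq ^ n).mulVec (Z n ∘ Sum.inr) = Z 0 ∘ Sum.inr := by
      intro n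
      induction n with
      | zero => simp
      | succ n ih => rw [pow_succ, ← Matrix.mulVec_mulVec, hr, ih]
    have h0 := hn qs
    rw [hH, Matrix.zero_mulVec] at h0
    refine ⟨Z 0 ∘ Sum.inl, ?_⟩
    rw [hQC, hZ' 0, h0, Sum.elim_comp_inl_inr]
  · rintro ⟨C, rfl⟩
    refine ⟨fun k => Q.mulVec (Sum.elim ((Jp ^ k).mulVec C) 0), ?_, ?_⟩
    · intro k
      rw [key, Matrix.fromBlocks_mulVec, Matrix.fromBlocks_mulVec]
      simp [pow_succ', Matrix.mulVec_mulVec]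
    · simp [hQC]
end

section
/- Homogeneous form of Theorem 2.1: a sequence Y : ℕ → ℝ^m satisfies F · Y_{k+1} = G · Y_k for all k ≥ 0 if and only if there exists C ∈ ℝ^p such that Y_k = Q_p · J_p^k · C for all k ≥ 0. -/
open Matrix Finset

/-- Homogeneous form of Theorem 2.1: `Y` solves `F Y_{k+1} = G Y_k` iff
`Y_k = Q_p J_p^k C` for some constant `C ∈ ℝ^p`. -/
theorem theorem_2_1_homogeneous
    (p q : ℕ) (hp : 1 ≤ p) (hq : 1 ≤ q)
    (F G P Q : Matrix (Fin p ⊕ Fin q) (Fin p ⊕ Fin q) ℝ)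
    (hP : IsUnit P) (hQ : IsUnit Q)
    (Jp : Matrix (Fin p) (Fin p) ℝ) (qs : ℕ) (Hq : Matrix (Fin q) (Fin q) ℝ)
    (hH : Hq ^ qs = 0)
    (hF : P * F * Q = Matrix.fromBlocks 1 0 0 Hq)
    (hG : P * G * Q = Matrix.fromBlocks Jp 0 0 1)
    (Qp : Matrix (Fin p ⊕ Fin q) (Fin p) ℝ) (hQp : Qp = Q.submatrix id Sum.inl)
    (Y : ℕ → (Fin p ⊕ Fin q) → ℝ) :
    (∀ k, F.mulVec (Y (k + 1)) = G.mulVec (Y k)) ↔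
      ∃ C : Fin p → ℝ, ∀ k, Y k = Qp.mulVec ((Jp ^ k).mulVec C) := by
  have hPinj : Function.Injective P.mulVec := Matrix.mulVec_injective_of_isUnit hP
  have hQinj : Function.Injective Q.mulVec := Matrix.mulVec_injective_of_isUnit hQ
  have hQsurj : Function.Surjective Q.mulVec := Matrix.mulVec_surjective_iff_isUnit.2 hQ
  have hQpv : ∀ w : Fin p → ℝ, Qp.mulVec w = Q.mulVec (Sum.elim w 0) := by
    intro w
    ext i
    simp [hQp, Matrix.mulVec, dotProduct]
  have key : ∀ (a c : Fin p → ℝ) (b d : Fin q → ℝ),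
      F.mulVec (Q.mulVec (Sum.elim a b)) = G.mulVec (Q.mulVec (Sum.elim c d)) ↔
        a = Jp.mulVec c ∧ Hq.mulVec b = d := by
    intro a c b d
    rw [← hPinj.eq_iff]
    simp only [Matrix.mulVec_mulVec, ← Matrix.mul_assoc]
    rw [hF, hG, Matrix.fromBlocks_mulVec, Matrix.fromBlocks_mulVec, Sum.elim_eq_iff]
    simp
  constructor
  · intro h
    choose Z hZ using fun k => hQsurj (Y k)
    have hZ' : ∀ k, Y k = Q.mulVec (Sum.elim (Z k ∘ Sum.inl) (Z k ∘ Sum.inr)) := by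
      intro k
      rw [Sum.elim_comp_inl_inr]
      exact (hZ k).symm
    have hs : ∀ k, Z (k + 1) ∘ Sum.inl = Jp.mulVec (Z k ∘ Sum.inl) ∧
        Hq.mulVec (Z (k + 1) ∘ Sum.inr) = Z k ∘ Sum.inr := by
      intro k
      have := h k
      rw [hZ' (k + 1), hZ' k] at this
      exact (key _ _ _ _).1 this
    have hv : ∀ n k, Z k ∘ Sum.inr = (Hq ^ n).mulVec (Z (k + n) ∘ Sum.inr) := by
      intro n
      induction n with
      | zero => intro k; simp
      | succ n ih =>
        intro k
        rw [ih k, ← (hs (k + n)).2, Matrix.mulVec_mulVec, ← pow_succ, add_assoc]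
    have hu : ∀ k, Z k ∘ Sum.inl = (Jp ^ k).mulVec (Z 0 ∘ Sum.inl) := by
      intro k
      induction k with
      | zero => simp
      | succ k ih => rw [(hs k).1, ih, Matrix.mulVec_mulVec, ← pow_succ']
    refine ⟨Z 0 ∘ Sum.inl, fun k => ?_⟩
    rw [hQpv, hZ' k, hu k, hv qs k, hH, Matrix.zero_mulVec]
  · rintro ⟨C, hC⟩ k
    rw [hC, hC, hQpv, hQpv, key]
    exact ⟨by rw [Matrix.mulVec_mulVec, ← pow_succ'], Matrix.mulVec_zero _⟩
end

section
/- Non-solvability for non-consistent initial data (proof of Theorem 3.1): if Q_p ∈ ℝ^{m×p} has full column rank p with m > p, and Y₀ ∈ ℝ^m does not lie in colspan(Q_p), then the overdetermined linear system Q_p · C = Y₀ has no solution C ∈ ℝ^p, and consequently for the homogeneous system F · Y_{k+1} = G · Y_k there is no solution sequence Y with Y(0) = Y₀. -/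
open Matrix Finset

/-- Non-solvability for non-consistent initial data: if `Y₀ ∉ colspan(Q_p)` then
`Q_p C = Y₀` has no solution and the homogeneous initial value problem has no solution. -/
theorem non_consistent_no_solution
    (p q : ℕ) (hp : 1 ≤ p) (hq : 1 ≤ q)
    (F G P Q : Matrix (Fin p ⊕ Fin q) (Fin p ⊕ Fin q) ℝ)
    (hP : IsUnit P) (hQ : IsUnit Q)
    (Jp : Matrix (Fin p) (Fin p) ℝ) (qs : ℕ) (Hq : Matrix (Fin q) (Fin q) ℝ)
    (hH : Hq ^ qs = 0)
    (hF : P * F * Q = Matrix.fromBlocks 1 0 0 Hq)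
    (hG : P * G * Q = Matrix.fromBlocks Jp 0 0 1)
    (Qp : Matrix (Fin p ⊕ Fin q) (Fin p) ℝ) (hQp : Qp = Q.submatrix id Sum.inl)
    (Y₀ : (Fin p ⊕ Fin q) → ℝ)
    (hY₀ : ¬ ∃ C : Fin p → ℝ, Y₀ = Qp.mulVec C) :
    (¬ ∃ C : Fin p → ℝ, Qp.mulVec C = Y₀) ∧
      ¬ ∃ Y : ℕ → (Fin p ⊕ Fin q) → ℝ,
          (∀ k, F.mulVec (Y (k + 1)) = G.mulVec (Y k)) ∧ Y 0 = Y₀ := by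
  refine ⟨fun ⟨C, hC⟩ => hY₀ ⟨C, hC.symm⟩, ?_⟩
  rintro ⟨Y, hY, h0⟩
  obtain ⟨R, hR⟩ := hQ.exists_right_inv
  have hQR : ∀ v, Q *ᵥ (R *ᵥ v) = v := fun v => by
    rw [Matrix.mulVec_mulVec, hR, Matrix.one_mulVec]
  have step : ∀ k, Hq *ᵥ (fun j => (R *ᵥ Y (k + 1)) (Sum.inr j))
      = fun j => (R *ᵥ Y k) (Sum.inr j) := by
    intro k
    have h1 : (P * F * Q) *ᵥ (R *ᵥ Y (k + 1)) = (P * G * Q) *ᵥ (R *ᵥ Y k) := by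
      rw [← Matrix.mulVec_mulVec _ (P * F) Q, ← Matrix.mulVec_mulVec _ (P * G) Q, hQR, hQR,
        ← Matrix.mulVec_mulVec, ← Matrix.mulVec_mulVec, hY k]
    rw [hF, hG, Matrix.fromBlocks_mulVec, Matrix.fromBlocks_mulVec] at h1
    funext j
    have h2 := congrFun h1 (Sum.inr j)
    simpa [Function.comp_def] using h2
  have iter : ∀ n, (fun j => (R *ᵥ Y 0) (Sum.inr j))
      = (Hq ^ n) *ᵥ (fun j => (R *ᵥ Y n) (Sum.inr j)) := by
    intro n
    induction n with
    | zero => simp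
    | succ n ih => rw [ih, ← step n, Matrix.mulVec_mulVec, pow_succ]
  have hz := iter qs
  rw [hH, Matrix.zero_mulVec] at hz
  apply hY₀
  refine ⟨fun i => (R *ᵥ Y 0) (Sum.inl i), ?_⟩
  rw [← h0, hQp]
  funext i
  rw [← congrFun (hQR (Y 0)) i]
  have hz' : ∀ j, (R *ᵥ Y 0) (Sum.inr j) = 0 := fun j => congrFun hz j
  rw [Matrix.mulVec, Matrix.mulVec]
  simp only [dotProduct, Fintype.sum_sum_type, hz', hQR]
  simp
end
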